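/- Let μ > 0, λ ∈ ℝ with λ + μ > 0, ω > 0, κ_p = ω/√(λ+2μ), κ_s = ω/√μ. Fix y ∈ ℝ³ and define, for x ≠ y, the 3×3 complex matrix Φ(x,y) = (κ_s²/(4πω²))(e^{iκ_s‖x−y‖}/‖x−y‖) I + (1/(4πω²)) H(x), where H(x) is the Hessian matrix in x, H_{jk}(x) = ∂²/∂x_j∂x_k [ e^{iκ_s‖x−y‖}/‖x−y‖ − e^{iκ_p‖x−y‖}/‖x−y‖ ], and I is the 3×3 identity. Then for every b ∈ ℂ³, the vector field x ↦ Φ(x,y) b satisfies the Navier equation μ Δu + (λ+μ) ∇(∇·u) + ω² u = 0 at every point of ℝ³ \ {y}. -/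

import Mathlib

/-!
Write `G`, `P` for the kernels `g_κ` with `κ = κs`, `κ = κp`. Off the pole they solve the Helmholtz
equations `ΔG = -κs² G` and `ΔP = -κp² P` (`lap_gker`, a radial computation), and so do their
directional derivatives `b·∇G`, `b·∇P` (`lap_dirD_helmholtz`), since partial derivatives of smooth
functions commute. With `C = 1 / (4πω²)` the field is `u = C κs² G b + C ∇(b·∇G - b·∇P)`, hence
`∇·u = C κp² b·∇P` and `Δu = -C κs⁴ G b + C ∇(-κs² b·∇G + κp² b·∇P)`. The coefficients of `G b`,
`∇(b·∇G)` and `∇(b·∇P)` in the Navier operator then vanish by `μ κs² = ω² = (λ + 2μ) κp²`.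
-/

open Real Metric

noncomputable section

/-- The Euclidean space `ℝ³`. -/
abbrev E3 := EuclideanSpace ℝ (Fin 3)

/-- Complex 3-vectors. -/
abbrev V3 := Fin 3 → ℂ

/-- The `j`-th standard basis vector of `ℝ³`. -/
def e3 (j : Fin 3) : E3 := EuclideanSpace.single j 1

/-- The `j`-th partial derivative of a scalar field `f : ℝ³ → ℂ`. -/
def pd (j : Fin 3) (f : E3 → ℂ) : E3 → ℂ := fun x => fderiv ℝ f x (e3 j)

/-- The componentwise Laplacian of a vector field `u : ℝ³ → ℂ³`. -/
def vecLap (u : E3 → V3) : E3 → V3 := fun x i => ∑ j, pd j (pd j (fun y => u y i)) x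

/-- The divergence `∇·u` of a vector field `u : ℝ³ → ℂ³`. -/
def divg (u : E3 → V3) : E3 → ℂ := fun x => ∑ j, pd j (fun y => u y j) x

/-- The gradient `∇f` of a scalar field `f : ℝ³ → ℂ`. -/
def grad (f : E3 → ℂ) : E3 → V3 := fun x j => pd j f x

/-- `u` satisfies the Navier equation `μ Δu + (λ+μ) ∇(∇·u) + ω² u = 0` at the point `x`. -/
def IsNavierSolutionAt (μ lam ω : ℝ) (u : E3 → V3) (x : E3) : Prop :=
  μ • vecLap u x + (lam + μ) • grad (divg u) x + ω ^ 2 • u x = 0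

/-- The kernel `g_κ(x) = e^{iκ‖x−y‖}/‖x−y‖`. -/
def gker (κ : ℝ) (y : E3) (x : E3) : ℂ :=
  Complex.exp (Complex.I * (κ : ℂ) * (‖x - y‖ : ℂ)) / ((‖x - y‖ : ℝ) : ℂ)

/-- The Kupradze fundamental solution
`Φ(x,y) = (κ_s²/(4πω²)) g_{κ_s}(x−y) I + (1/(4πω²)) Hess_x[g_{κ_s} − g_{κ_p}](x−y)`. -/
def PhiMat (ω κp κs : ℝ) (y x : E3) (j k : Fin 3) : ℂ :=
  ((κs ^ 2 / (4 * π * ω ^ 2) : ℝ) : ℂ) * gker κs y x * (if j = k then 1 else 0)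
    + ((1 / (4 * π * ω ^ 2) : ℝ) : ℂ)
      * pd j (pd k (fun z => gker κs y z - gker κp y z)) x

/-- `f` is smooth on `ℝ³ \ {y}`. -/
def SmoothOff (y : E3) (f : E3 → ℂ) : Prop := ∀ x, x ≠ y → ContDiffAt ℝ (⊤ : ℕ∞) f x

/-- The scalar Laplacian. -/
def lap (f : E3 → ℂ) : E3 → ℂ := fun x => ∑ j, pd j (pd j f) x

/-- The derivative `b·∇f` along the complex vector `b`. -/
def dirD (b : V3) (f : E3 → ℂ) : E3 → ℂ := fun x => ∑ k, b k * pd k f x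

lemma SmoothOff.differentiableAt {y : E3} {f : E3 → ℂ} (hf : SmoothOff y f) {x : E3}
    (hx : x ≠ y) : DifferentiableAt ℝ f x :=
  (hf x hx).differentiableAt (by simp)

lemma SmoothOff.pd {y : E3} {f : E3 → ℂ} (hf : SmoothOff y f) (j : Fin 3) :
    SmoothOff y (pd j f) := by
  intro x hx
  have h : ContDiffAt ℝ (⊤ : ℕ∞) (fderiv ℝ f) x := (hf x hx).fderiv_right (by simp)
  exact h.clm_apply contDiffAt_const

lemma SmoothOff.lin {y : E3} {f g : E3 → ℂ} (hf : SmoothOff y f) (hg : SmoothOff y g) (a c : ℂ) :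
    SmoothOff y (fun x => a * f x + c * g x) := fun x hx =>
  (contDiffAt_const.mul (hf x hx)).add (contDiffAt_const.mul (hg x hx))

lemma SmoothOff.sum {y : E3} {f : Fin 3 → E3 → ℂ} (hf : ∀ k, SmoothOff y (f k)) (b : V3) :
    SmoothOff y (fun x => ∑ k, b k * f k x) := fun x hx =>
  ContDiffAt.sum fun k _ => contDiffAt_const.mul (hf k x hx)

lemma SmoothOff.dirD {y : E3} {f : E3 → ℂ} (hf : SmoothOff y f) (b : V3) :
    SmoothOff y (dirD b f) := SmoothOff.sum (fun k => hf.pd k) b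

/-- Partial derivatives on the open set `ℝ³ \ {y}` only depend on the values there. -/
lemma pd_congr {y : E3} {f g : E3 → ℂ} (h : ∀ x, x ≠ y → f x = g x) (j : Fin 3) {x : E3}
    (hx : x ≠ y) : pd j f x = pd j g x := by
  have : f =ᶠ[nhds x] g := by
    filter_upwards [isOpen_ne.mem_nhds hx] with z hz using h z hz
  simp only [pd, this.fderiv_eq]

lemma pd_lin {y : E3} {f g : E3 → ℂ} (hf : SmoothOff y f) (hg : SmoothOff y g) (a c : ℂ)
    (j : Fin 3) {x : E3} (hx : x ≠ y) :
    pd j (fun x => a * f x + c * g x) x = a * pd j f x + c * pd j g x := by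
  have h := ((hf.differentiableAt hx).hasFDerivAt.const_mul a).add
    ((hg.differentiableAt hx).hasFDerivAt.const_mul c)
  have h' : HasFDerivAt (fun x => a * f x + c * g x) _ x := h
  simp [pd, h'.fderiv]

lemma pd_sum {y : E3} {f : Fin 3 → E3 → ℂ} (hf : ∀ k, SmoothOff y (f k)) (b : V3)
    (j : Fin 3) {x : E3} (hx : x ≠ y) :
    pd j (fun x => ∑ k, b k * f k x) x = ∑ k, b k * pd j (f k) x := by
  have h : HasFDerivAt (fun x => ∑ k, b k * f k x) _ x := HasFDerivAt.fun_sum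
    (u := Finset.univ) fun k _ => ((hf k).differentiableAt hx).hasFDerivAt.const_mul (b k)
  simp [pd, h.fderiv]

/-- Symmetry of second derivatives. -/
lemma pd_comm {y : E3} {f : E3 → ℂ} (hf : SmoothOff y f) (j k : Fin 3) {x : E3} (hx : x ≠ y) :
    pd j (pd k f) x = pd k (pd j f) x := by
  have h : ContDiffAt ℝ (⊤ : ℕ∞) (fderiv ℝ f) x := (hf x hx).fderiv_right (by simp)
  have hd : DifferentiableAt ℝ (fderiv ℝ f) x := h.differentiableAt (by simp)
  have key : ∀ v w : E3, fderiv ℝ (fun z => fderiv ℝ f z v) x w = fderiv ℝ (fderiv ℝ f) x w v := by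
    intro v w
    have h1 : HasFDerivAt (fun z => fderiv ℝ f z v) _ x :=
      hd.hasFDerivAt.clm_apply (hasFDerivAt_const v x)
    simp [h1.fderiv]
  have hs : IsSymmSndFDerivAt ℝ f x := (hf x hx).isSymmSndFDerivAt (by
    simp only [minSmoothness_of_isRCLikeNormedField]; exact WithTop.coe_le_coe.2 (le_top : (2 : ℕ∞) ≤ ⊤))
  change fderiv ℝ (fun z => fderiv ℝ f z (e3 k)) x (e3 j)
    = fderiv ℝ (fun z => fderiv ℝ f z (e3 j)) x (e3 k)
  rw [key, key]
  exact hs _ _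

lemma lap_lin {y : E3} {f g : E3 → ℂ} (hf : SmoothOff y f) (hg : SmoothOff y g) (a c : ℂ)
    {x : E3} (hx : x ≠ y) :
    lap (fun x => a * f x + c * g x) x = a * lap f x + c * lap g x := by
  simp only [lap, Finset.mul_sum, ← Finset.sum_add_distrib]
  refine Finset.sum_congr rfl fun j _ => ?_
  rw [pd_congr (fun z hz => pd_lin hf hg a c j hz) j hx, pd_lin (hf.pd j) (hg.pd j) a c j hx]

lemma lap_congr {y : E3} {f g : E3 → ℂ} (h : ∀ x, x ≠ y → f x = g x) {x : E3}
    (hx : x ≠ y) : lap f x = lap g x :=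
  Finset.sum_congr rfl fun j _ => pd_congr (fun _ hz => pd_congr h j hz) j hx

lemma lap_pd {y : E3} {f : E3 → ℂ} (hf : SmoothOff y f) (i : Fin 3) {x : E3} (hx : x ≠ y) :
    lap (pd i f) x = pd i (lap f) x := by
  have h := pd_sum (fun j => (hf.pd j).pd j) (fun _ => 1) i hx
  simp only [one_mul] at h
  unfold lap
  rw [h]
  refine Finset.sum_congr rfl fun j _ => ?_
  rw [pd_congr (fun z hz => pd_comm hf j i hz) j hx, pd_comm (hf.pd j) j i hx]

/-- Derivatives of solutions of the Helmholtz equation solve the Helmholtz equation. -/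
lemma lap_pd_helmholtz {y : E3} {f : E3 → ℂ} (hf : SmoothOff y f) {c : ℂ}
    (h : ∀ x, x ≠ y → lap f x = c * f x) (i : Fin 3) {x : E3} (hx : x ≠ y) :
    lap (pd i f) x = c * pd i f x := by
  have h2 : ∀ x, x ≠ y → lap f x = c * f x + 0 * f x := fun x hx => by rw [h x hx]; ring
  rw [lap_pd hf i hx, pd_congr h2 i hx, pd_lin hf hf c 0 i hx]
  ring

lemma lap_dirD_helmholtz {y : E3} {f : E3 → ℂ} (hf : SmoothOff y f) {c : ℂ}
    (h : ∀ x, x ≠ y → lap f x = c * f x) (b : V3) {x : E3} (hx : x ≠ y) :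
    lap (dirD b f) x = c * dirD b f x := by
  have e : lap (dirD b f) x = ∑ k, b k * lap (pd k f) x := by
    simp only [lap, Finset.mul_sum]
    rw [Finset.sum_comm]
    refine Finset.sum_congr rfl fun j _ => ?_
    rw [pd_congr (f := pd j (dirD b f)) (fun z hz => pd_sum (fun k => hf.pd k) b j hz) j hx,
      pd_sum (fun k => (hf.pd k).pd j) b j hx]
  rw [e, dirD, Finset.mul_sum]
  refine Finset.sum_congr rfl fun k _ => ?_
  rw [lap_pd_helmholtz hf h k hx]
  ring

/-- The chain rule for `x ↦ φ(‖x - y‖)`, using `∂ⱼ‖x - y‖ = (xⱼ - yⱼ) / ‖x - y‖`. -/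
lemma hasFDerivAt_radial {φ : ℝ → ℂ} {φ' : ℂ} {x y : E3} (hx : x ≠ y)
    (hφ : HasDerivAt φ φ' ‖x - y‖) :
    ∃ L : E3 →L[ℝ] ℂ, HasFDerivAt (fun z => φ ‖z - y‖) L x ∧
      ∀ j, L (e3 j) = φ' * ((x j - y j : ℝ) : ℂ) / ((‖x - y‖ : ℝ) : ℂ) := by
  have hr : ‖x - y‖ ≠ 0 := norm_ne_zero_iff.2 (sub_ne_zero.2 hx)
  have h1 : HasFDerivAt (fun z : E3 => ‖z - y‖ ^ 2) _ x :=
    ((hasFDerivAt_id x).sub_const y).norm_sq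
  have h2 := h1.sqrt (pow_ne_zero 2 hr)
  simp only [Real.sqrt_sq (norm_nonneg _)] at h2
  have h3 := hφ.hasFDerivAt.comp x h2
  refine ⟨_, h3, fun j => ?_⟩
  simp [e3, EuclideanSpace.inner_single_right]
  field_simp

lemma gker_smooth (κ : ℝ) (y : E3) : SmoothOff y (gker κ y) := by
  intro x hx
  have hr : ‖x - y‖ ≠ 0 := norm_ne_zero_iff.2 (sub_ne_zero.2 hx)
  have h1 : ContDiffAt ℝ (⊤ : ℕ∞) (fun z : E3 => ‖z - y‖) x :=
    (contDiffAt_id.sub contDiffAt_const).norm ℝ (sub_ne_zero.2 hx)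
  have h2 : ContDiffAt ℝ (⊤ : ℕ∞) (fun z : E3 => ((‖z - y‖ : ℝ) : ℂ)) x :=
    Complex.ofRealCLM.contDiff.contDiffAt.comp x h1
  have h3 := ((contDiffAt_const (c := Complex.I * (κ : ℂ))).mul h2).cexp
  have h4 : gker κ y = fun z => Complex.exp (Complex.I * (κ : ℂ) * (‖z - y‖ : ℂ)) *
      ((‖z - y‖ : ℝ) : ℂ)⁻¹ := by
    ext z
    rw [gker, div_eq_mul_inv]
  rw [h4]
  exact h3.mul (h2.inv (by exact_mod_cast hr))

lemma pd_gker (κ : ℝ) (y : E3) (j : Fin 3) {x : E3} (hx : x ≠ y) :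
    pd j (gker κ y) x = (fun r : ℝ => Complex.exp (Complex.I * κ * r) *
      (Complex.I * κ * r - 1) / (r : ℂ) ^ 3) ‖x - y‖ * ((x j - y j : ℝ) : ℂ) := by
  have hr : ((‖x - y‖ : ℝ) : ℂ) ≠ 0 := by
    exact_mod_cast norm_ne_zero_iff.2 (sub_ne_zero.2 hx)
  have ho : HasDerivAt (fun r : ℝ => (r : ℂ)) 1 ‖x - y‖ := Complex.ofRealCLM.hasDerivAt
  have h := ((ho.const_mul (Complex.I * (κ : ℂ))).cexp).div ho hr
  obtain ⟨L, hL, hj⟩ := hasFDerivAt_radial hx h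
  have hL' : HasFDerivAt (gker κ y) L x := hL
  rw [pd, hL'.fderiv, hj]
  field_simp

/-- The kernel solves the Helmholtz equation `Δg + κ² g = 0` off its pole. -/
lemma lap_gker (κ : ℝ) (y : E3) {x : E3} (hx : x ≠ y) :
    lap (gker κ y) x = -(κ : ℂ) ^ 2 * gker κ y x := by
  have hr : ((‖x - y‖ : ℝ) : ℂ) ≠ 0 := by
    exact_mod_cast norm_ne_zero_iff.2 (sub_ne_zero.2 hx)
  have ho : HasDerivAt (fun r : ℝ => (r : ℂ)) 1 ‖x - y‖ := Complex.ofRealCLM.hasDerivAt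
  have hlin := ho.const_mul (Complex.I * (κ : ℂ))
  have h := (hlin.cexp.mul (hlin.sub_const 1)).div (ho.pow 3) (pow_ne_zero 3 hr)
  obtain ⟨L, hL, hj⟩ := hasFDerivAt_radial hx h
  have hc : ∀ j : Fin 3, HasFDerivAt (fun z : E3 => ((z j - y j : ℝ) : ℂ))
      (Complex.ofRealCLM.comp (EuclideanSpace.proj j : E3 →L[ℝ] ℝ)) x := fun j =>
    Complex.ofRealCLM.hasFDerivAt.comp x
      (((EuclideanSpace.proj j : E3 →L[ℝ] ℝ).hasFDerivAt).sub_const (y j))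
  have hs : ((‖x - y‖ : ℝ) : ℂ) ^ 2 = ∑ j, ((x j - y j : ℝ) : ℂ) ^ 2 := by
    have := EuclideanSpace.real_norm_sq_eq (x - y)
    exact_mod_cast this
  have hpp : ∀ j, pd j (pd j (gker κ y)) x
      = L (e3 j) * ((x j - y j : ℝ) : ℂ) + Complex.exp (Complex.I * κ * (‖x - y‖ : ℝ)) *
      (Complex.I * κ * (‖x - y‖ : ℝ) - 1) / ((‖x - y‖ : ℝ) : ℂ) ^ 3 := by
    intro j
    rw [pd_congr (fun z hz => pd_gker κ y j hz) j hx]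
    have h1 := hL.mul (hc j)
    have h1' : HasFDerivAt (fun z : E3 => (fun r : ℝ => Complex.exp (Complex.I * κ * r) *
      (Complex.I * κ * r - 1) / (r : ℂ) ^ 3) ‖z - y‖ * ((z j - y j : ℝ) : ℂ)) _ x := h1
    rw [pd, h1'.fderiv]
    simp [e3]
    ring
  simp only [lap, hpp, hj, gker, Nat.cast_ofNat, Pi.mul_apply, Pi.pow_apply]
  rw [Fin.sum_univ_three] at hs ⊢
  clear hpp hj hL hc h hlin ho
  generalize ((‖x - y‖ : ℝ) : ℂ) = r at *
  generalize ((x 0 - y 0 : ℝ) : ℂ) = a at *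
  generalize ((x 1 - y 1 : ℝ) : ℂ) = b at *
  generalize ((x 2 - y 2 : ℝ) : ℂ) = c at *
  generalize Complex.exp (Complex.I * κ * r) = E at *
  field_simp
  linear_combination (-E * (Complex.I ^ 2 * κ ^ 2 * r ^ 4 - 3 * r ^ 2 * (Complex.I * κ * r - 1)))
    * hs + E * κ ^ 2 * r ^ 6 * Complex.I_sq

/-- For every `b ∈ ℂ³`, the column combination `x ↦ Φ(x,y) b` of the Kupradze fundamental
solution satisfies the Navier equation at every point `x ≠ y`. -/
theorem stmt_12 (μ lam ω : ℝ) (hμ : 0 < μ) (hlamμ : 0 < lam + μ) (hω : 0 < ω)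
    (κp κs : ℝ) (hκp : κp = ω / Real.sqrt (lam + 2 * μ)) (hκs : κs = ω / Real.sqrt μ)
    (y : E3) (b : V3) :
    ∀ x : E3, x ≠ y →
      IsNavierSolutionAt μ lam ω (fun z i => ∑ k, PhiMat ω κp κs y z i k * b k) x := by
  intro x hx
  have hl : 0 < lam + 2 * μ := by linarith
  have hs2 : (μ : ℂ) * (κs : ℂ) ^ 2 = (ω : ℂ) ^ 2 := by
    have : μ * κs ^ 2 = ω ^ 2 := by
      rw [hκs, div_pow, Real.sq_sqrt hμ.le]; field_simp
    exact_mod_cast this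
  have hp2 : ((lam : ℂ) + 2 * μ) * (κp : ℂ) ^ 2 = (ω : ℂ) ^ 2 := by
    have : (lam + 2 * μ) * κp ^ 2 = ω ^ 2 := by
      rw [hκp, div_pow, Real.sq_sqrt hl.le]; field_simp
    exact_mod_cast this
  set G := gker κs y with hG
  set P := gker κp y with hP
  have sG : SmoothOff y G := gker_smooth κs y
  have sP : SmoothOff y P := gker_smooth κp y
  have lG : ∀ z, z ≠ y → lap G z = -(κs : ℂ) ^ 2 * G z := fun z hz => lap_gker κs y hz
  have lP : ∀ z, z ≠ y → lap P z = -(κp : ℂ) ^ 2 * P z := fun z hz => lap_gker κp y hz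
  set C : ℂ := ((1 / (4 * π * ω ^ 2) : ℝ) : ℂ) with hC
  have hA : ((κs ^ 2 / (4 * π * ω ^ 2) : ℝ) : ℂ) = (κs : ℂ) ^ 2 * C := by
    rw [hC]; push_cast; ring
  set F : E3 → ℂ := fun z => 1 * dirD b G z + (-1) * dirD b P z with hF
  have sF : SmoothOff y F := (sG.dirD b).lin (sP.dirD b) 1 (-1)
  have hu : ∀ i z, z ≠ y → ∑ k, PhiMat ω κp κs y z i k * b k
      = ((κs : ℂ) ^ 2 * C * b i) * G z + C * pd i F z := by
    intro i z hz
    have h1 : pd i F z = ∑ k, b k * pd i (pd k (fun z => G z - P z)) z := by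
      have hw : ∀ k z, z ≠ y → pd k (fun z => G z - P z) z = 1 * pd k G z + (-1) * pd k P z := by
        intro k z hz
        rw [← pd_lin sG sP 1 (-1) k hz]
        congr 1; ext; ring
      rw [hF, pd_lin (sG.dirD b) (sP.dirD b) 1 (-1) i hz]
      unfold dirD
      rw [pd_sum (fun k => sG.pd k) b i hz, pd_sum (fun k => sP.pd k) b i hz, Finset.mul_sum,
        Finset.mul_sum, ← Finset.sum_add_distrib]
      refine Finset.sum_congr rfl fun k _ => ?_
      rw [pd_congr (hw k) i hz, pd_lin (sG.pd k) (sP.pd k) 1 (-1) i hz]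
      ring
    simp only [PhiMat, hA, ← hG, ← hP, ← hC, h1, add_mul, Finset.sum_add_distrib, Finset.mul_sum]
    congr 1
    · simp [mul_ite]; ring
    · exact Finset.sum_congr rfl fun k _ => by ring
  have lF : ∀ z, z ≠ y → lap F z
      = -(κs : ℂ) ^ 2 * dirD b G z + (κp : ℂ) ^ 2 * dirD b P z := by
    intro z hz
    rw [hF, lap_lin (sG.dirD b) (sP.dirD b) 1 (-1) hz, lap_dirD_helmholtz sG lG b hz,
      lap_dirD_helmholtz sP lP b hz]
    ring
  -- The `b·∇G` terms cancel: the shear part of the field is divergence free.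
  have hdiv : ∀ z, z ≠ y → divg (fun z i => ∑ k, PhiMat ω κp κs y z i k * b k) z
      = 0 * dirD b G z + (C * (κp : ℂ) ^ 2) * dirD b P z := by
    intro z hz
    have : divg (fun z i => ∑ k, PhiMat ω κp κs y z i k * b k) z
        = (κs : ℂ) ^ 2 * C * dirD b G z + C * lap F z := by
      simp only [divg, dirD, lap, Finset.mul_sum, ← Finset.sum_add_distrib]
      refine Finset.sum_congr rfl fun i _ => ?_
      rw [pd_congr (hu i) i hz, pd_lin sG (sF.pd i) _ _ i hz]
      ring
    rw [this, lF z hz]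
    ring
  funext i
  have hgd : grad (divg (fun z i => ∑ k, PhiMat ω κp κs y z i k * b k)) x i
      = C * (κp : ℂ) ^ 2 * pd i (dirD b P) x := by
    rw [grad, pd_congr hdiv i hx, pd_lin (sG.dirD b) (sP.dirD b) _ _ i hx]
    ring
  have hlap : vecLap (fun z i => ∑ k, PhiMat ω κp κs y z i k * b k) x i
      = (κs : ℂ) ^ 2 * C * b i * (-(κs : ℂ) ^ 2 * G x)
        + C * (-(κs : ℂ) ^ 2 * pd i (dirD b G) x + (κp : ℂ) ^ 2 * pd i (dirD b P) x) := by
    change lap (fun z => ∑ k, PhiMat ω κp κs y z i k * b k) x = _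
    rw [lap_congr (hu i) hx, lap_lin sG (sF.pd i) _ _ hx, lG x hx, lap_pd sF i hx,
      pd_congr lF i hx, pd_lin (sG.dirD b) (sP.dirD b) _ _ i hx]
  have hFi : pd i F x = 1 * pd i (dirD b G) x + (-1) * pd i (dirD b P) x :=
    pd_lin (sG.dirD b) (sP.dirD b) _ _ i hx
  simp only [Pi.add_apply, Pi.smul_apply, Pi.zero_apply, hgd, hlap, hu i x hx, hFi,
    Complex.real_smul]
  push_cast
  linear_combination (-(κs : ℂ) ^ 2 * C * b i * G x - C * pd i (dirD b G) x) * hs2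
    + C * pd i (dirD b P) x * hp2
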